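/- Assume in addition that r0 is small enough that S'(h) : ℝ^k → E is injective for every h ∈ B_{ℝ^k}(h0,r0). Then there exist δ ∈ (0,r0) and r1 > 0 such that: (i) h0 is the only point h in the closed ball B̄_{ℝ^k}(h0,δ) satisfying π_{1,h}(ξ0 − S(h)) = 0; (ii) for every ξ ∈ B_E(ξ0,r1) there exists h ∈ B_{ℝ^k}(h0,δ) with π_{1,h}(ξ − S(h)) = 0; (iii) every map H : B_E(ξ0,r1) → B̄_{ℝ^k}(h0,δ) satisfying π_{1,H(ξ)}(ξ − S(H(ξ))) = 0 for all ξ ∈ B_E(ξ0,r1) satisfies H(ξ) → h0 as ξ → ξ0. -/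

import Mathlib

open Set Metric Topology Filter

/- Put `V = ℝ^k` and let `T : E → V` satisfy `T ∘ D = id` and `D ∘ T = π₁(h₀)`, with `D` the
derivative of `S` at `h₀`. For `h` near `h₀`, `T` is injective on the range of `π₁(h)`, so
`π₁(h)(ξ - S h) = 0` is equivalent to `T (π₁(h)(ξ - S h)) = 0`, an equation whose unknown and value
both live in `V`. As `S h - S h₀` vanishes at `h₀`, continuity of `π₁` suffices for
`h ↦ T (π₁(h)(S h - S h₀))` to have derivative `id` at `h₀`. Hence solutions satisfy
`‖h - h₀‖ ≤ C ‖ξ - S h₀‖`, and `h ↦ h + T (π₁(h)(ξ - S h))` maps a small closed ball to itself.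
This map need not be a contraction, so its fixed point comes from Brouwer's theorem.

Brouwer's theorem is proved by Milnor's volume argument. If `φ` vanishes on the boundary of a
compact set `s`, then `x ↦ x + t φ x` is a bijection of `s` for small `t`, so the integral of
its Jacobian is the volume of `s`. This integral is a polynomial in `t`, hence equal to the
volume for `t = 1` too. If `x ↦ x + φ x` retracts a ball onto its sphere, however, its Jacobian
vanishes identically. -/

section

open Module Function Bornology MeasureTheory Polynomial
open scoped NNReal

theorem inter_frontier_nonempty_of_isPreconnected {X : Type*} [TopologicalSpace X] {s t : Set X}
    (ht : IsPreconnected t) (hs : (t ∩ s).Nonempty) (hsc : (t ∩ sᶜ).Nonempty) :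
    (t ∩ frontier s).Nonempty := by
  by_contra! h
  have hsub : ∀ z ∈ t, z ∈ closure s → z ∈ interior s := fun z hz hzs => by
    by_contra hzi
    exact h.subset ⟨hz, hzs, hzi⟩
  obtain ⟨z, -, hzi, hzc⟩ := ht (interior s) (closure s)ᶜ isOpen_interior
    isClosed_closure.isOpen_compl
    (fun z hz => (em (z ∈ closure s)).imp_left (hsub z hz))
    (hs.mono fun z hz => ⟨hz.1, hsub z hz.1 (subset_closure hz.2)⟩)
    (hsc.mono fun z hz => ⟨hz.1, fun hzs => hz.2 (interior_subset (hsub z hz.1 hzs))⟩)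
  exact hzc (interior_subset_closure hzi)

theorem lipschitzWith_indicator_of_forall_mem_frontier_eq_zero {E F : Type*}
    [SeminormedAddCommGroup E] [NormedSpace ℝ E] [SeminormedAddCommGroup F] {s : Set E}
    {φ : E → F} {K : ℝ≥0} (hs : IsClosed s) (hφ : LipschitzOnWith K φ s)
    (hfr : ∀ x ∈ frontier s, φ x = 0) : LipschitzWith K (s.indicator φ) := by
  have key : ∀ x ∈ s, ∀ y ∉ s, dist (φ x) 0 ≤ K * dist x y := by
    intro x hx y hy
    obtain ⟨z, hz, hzs⟩ := inter_frontier_nonempty_of_isPreconnected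
      (convex_segment x y).isPreconnected ⟨x, left_mem_segment ℝ x y, hx⟩
      ⟨y, right_mem_segment ℝ x y, hy⟩
    calc dist (φ x) 0 = dist (φ x) (φ z) := by rw [hfr z hzs]
      _ ≤ K * dist x z := hφ.dist_le_mul x hx z (hs.frontier_subset hzs)
      _ ≤ K * dist x y := by
        gcongr
        linarith [dist_add_dist_of_mem_segment hz, dist_nonneg (x := z) (y := y)]
  refine LipschitzWith.of_dist_le_mul fun x y => ?_
  by_cases hx : x ∈ s <;> by_cases hy : y ∈ s <;> simp only [indicator, hx, hy, if_true, if_false]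
  · exact hφ.dist_le_mul x hx y hy
  · exact key x hx y hy
  · rw [dist_comm, dist_comm x]
    exact key y hy x hx
  · simp only [dist_self]; positivity

theorem bijective_id_add_of_lipschitzWith {E : Type*} [NormedAddCommGroup E] [NormedSpace ℝ E]
    [CompleteSpace E] {φ : E → E} {K : ℝ≥0} (hφ : LipschitzWith K φ) (hK : K < 1) :
    Function.Bijective fun x => x + φ x := by
  have happ : ApproximatesLinearOn (fun x => x + φ x)
      (ContinuousLinearEquiv.refl ℝ E : E →L[ℝ] E) univ K := by
    rw [ApproximatesLinearOn.approximatesLinearOn_iff_lipschitzOnWith, lipschitzOnWith_univ]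
    convert! hφ using 1
    ext x
    simp
  refine (happ.toHomeomorph _ ?_).bijective
  rcases subsingleton_or_nontrivial E with h | h
  · exact Or.inl h
  · right
    simpa using hK

theorem bijOn_id_add_of_lipschitzOnWith {E : Type*} [NormedAddCommGroup E] [NormedSpace ℝ E]
    [CompleteSpace E] {s : Set E} {φ : E → E} {K : ℝ≥0} (hs : IsClosed s)
    (hφ : LipschitzOnWith K φ s) (hK : K < 1) (hfr : ∀ x ∈ frontier s, φ x = 0) :
    BijOn (fun x => x + φ x) s s := by
  have hbij := bijective_id_add_of_lipschitzWith
    (lipschitzWith_indicator_of_forall_mem_frontier_eq_zero hs hφ hfr) hK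
  have hcompl : BijOn (fun x => x + s.indicator φ x) sᶜ sᶜ :=
    (bijOn_id sᶜ).congr fun x hx => by simp [indicator_of_notMem hx]
  have h := hcompl.compl hbij
  rw [compl_compl] at h
  exact h.congr fun x hx => by simp [indicator_of_mem hx]

theorem exists_polynomial_eval_eq_det_add_smul {𝕜 V : Type*} [Field 𝕜] [AddCommGroup V]
    [Module 𝕜 V] [FiniteDimensional 𝕜 V] (A B : V →ₗ[𝕜] V) :
    ∃ p : 𝕜[X], p.natDegree ≤ Module.finrank 𝕜 V ∧ ∀ t, p.eval t = LinearMap.det (A + t • B) := by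
  let b := Module.finBasis 𝕜 V
  refine ⟨((X : 𝕜[X]) • (LinearMap.toMatrix b b B).map C + (LinearMap.toMatrix b b A).map C).det,
    ?_, fun t => ?_⟩
  · simpa using natDegree_det_X_add_C_le (LinearMap.toMatrix b b B) (LinearMap.toMatrix b b A)
  · rw [← LinearMap.det_toMatrix b, ← coe_evalRingHom, RingHom.map_det]
    congr 1
    ext i j
    simp [add_comm, mul_comm t]

theorem exists_polynomial_eval_eq_integral {α : Type*} [MeasurableSpace α] {μ : Measure α}
    {p : α → ℝ[X]} {n : ℕ} (hdeg : ∀ x, (p x).natDegree ≤ n)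
    (hint : ∀ t, Integrable (fun x => (p x).eval t) μ) :
    ∃ P : ℝ[X], ∀ t, P.eval t = ∫ x, (p x).eval t ∂μ := by
  let v : ℕ → ℝ := Nat.cast
  have hv : InjOn v (Finset.range (n + 1)) := Nat.cast_injective.injOn
  have hp : ∀ x t, (p x).eval t = ∑ i ∈ Finset.range (n + 1),
      (p x).eval (v i) * (Lagrange.basis (Finset.range (n + 1)) v i).eval t := by
    intro x t
    have hlt : (p x).degree < (Finset.range (n + 1)).card := by
      rw [Finset.card_range]
      exact (degree_le_of_natDegree_le (hdeg x)).trans_lt (by exact_mod_cast n.lt_succ_self)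
    conv_lhs => rw [Lagrange.eq_interpolate hv hlt, Lagrange.interpolate_apply, eval_finsetSum]
    simp only [eval_mul, eval_C]
  refine ⟨Lagrange.interpolate (Finset.range (n + 1)) v fun i => ∫ x, (p x).eval (v i) ∂μ,
    fun t => ?_⟩
  simp_rw [hp _ t]
  rw [integral_finsetSum _ fun i _ => (hint _).mul_const _]
  simp only [Lagrange.interpolate_apply, eval_finsetSum, eval_mul, eval_C, integral_mul_const]

section VolumeArgument

variable {V : Type*} [NormedAddCommGroup V] [NormedSpace ℝ V] [FiniteDimensional ℝ V]

theorem eventually_integral_det_id_add_smul_fderiv_eq [MeasurableSpace V] [BorelSpace V]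
    (μ : Measure V) [μ.IsAddHaarMeasure] {s : Set V} {φ : V → V}
    (hs : IsCompact s) (hφ : ContDiff ℝ 1 φ) (hfr : ∀ x ∈ frontier s, φ x = 0) :
    ∀ᶠ t : ℝ in 𝓝 0, ∫ x in s, (ContinuousLinearMap.id ℝ V + t • fderiv ℝ φ x).det ∂μ =
      μ.real s := by
  obtain ⟨K, hK⟩ :=
    (hφ.locallyLipschitz.locallyLipschitzOn (s := s)).exists_lipschitzOnWith_of_compact hs
  have hcontr : ∀ᶠ t : ℝ in 𝓝 0, ‖t‖₊ * K < 1 :=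
    ((continuous_nnnorm.mul continuous_const).tendsto' 0 0 (by simp)).eventually_lt_const one_pos
  have hdet : ∀ᶠ t : ℝ in 𝓝 0, ∀ x ∈ s,
      0 < (ContinuousLinearMap.id ℝ V + t • fderiv ℝ φ x).det := by
    refine hs.eventually_forall_of_forall_eventually fun x _ => ?_
    have hcont : Continuous fun z : ℝ × V =>
        (ContinuousLinearMap.id ℝ V + z.1 • fderiv ℝ φ z.2).det :=
      ContinuousLinearMap.continuous_det.comp <| continuous_const.add <|
        continuous_fst.smul ((hφ.continuous_fderiv one_ne_zero).comp continuous_snd)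
    refine hcont.continuousAt.eventually (lt_mem_nhds ?_)
    simp [ContinuousLinearMap.det]
  filter_upwards [hcontr, hdet] with t ht hpos
  have hbij : BijOn (fun x => x + t • φ x) s s :=
    bijOn_id_add_of_lipschitzOnWith hs.isClosed ((lipschitzWith_smul t).comp_lipschitzOnWith hK)
      ht fun x hx => by simp [hfr x hx]
  have hderiv : ∀ x ∈ s, HasFDerivWithinAt (fun x => x + t • φ x)
      (ContinuousLinearMap.id ℝ V + t • fderiv ℝ φ x) s x := fun x _ =>
    ((hasFDerivAt_id x).add
      ((hφ.differentiable one_ne_zero x).hasFDerivAt.const_smul t)).hasFDerivWithinAt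
  calc ∫ x in s, (ContinuousLinearMap.id ℝ V + t • fderiv ℝ φ x).det ∂μ
      = ∫ x in s, |(ContinuousLinearMap.id ℝ V + t • fderiv ℝ φ x).det| • (1 : ℝ) ∂μ :=
        setIntegral_congr_fun hs.measurableSet fun x hx => by simp [abs_of_pos (hpos x hx)]
    _ = ∫ _ in (fun x => x + t • φ x) '' s, (1 : ℝ) ∂μ :=
        (integral_image_eq_integral_abs_det_fderiv_smul μ hs.measurableSet hderiv
          hbij.injOn fun _ => (1 : ℝ)).symm
    _ = μ.real s := by rw [hbij.image_eq, setIntegral_const, smul_eq_mul, mul_one]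

theorem integral_det_id_add_fderiv_eq [MeasurableSpace V] [BorelSpace V]
    (μ : Measure V) [μ.IsAddHaarMeasure] {s : Set V} {φ : V → V}
    (hs : IsCompact s) (hφ : ContDiff ℝ 1 φ) (hfr : ∀ x ∈ frontier s, φ x = 0) :
    ∫ x in s, (ContinuousLinearMap.id ℝ V + fderiv ℝ φ x).det ∂μ = μ.real s := by
  choose p hdeg hp using fun x =>
    exists_polynomial_eval_eq_det_add_smul LinearMap.id (fderiv ℝ φ x : V →ₗ[ℝ] V)
  have hpdet : ∀ t x, (p x).eval t = (ContinuousLinearMap.id ℝ V + t • fderiv ℝ φ x).det :=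
    fun t x => hp x t
  have hcont : ∀ t, Continuous fun x => (p x).eval t := fun t => by
    simp_rw [hpdet]
    exact ContinuousLinearMap.continuous_det.comp <| continuous_const.add <|
      (hφ.continuous_fderiv one_ne_zero).const_smul t
  obtain ⟨P, hP⟩ := exists_polynomial_eval_eq_integral (μ := μ.restrict s) hdeg fun t =>
    (hcont t).continuousOn.integrableOn_compact hs
  have hconst : P = C (μ.real s) := by
    refine eq_of_infinite_eval_eq _ _ (infinite_of_mem_nhds 0 ?_)
    filter_upwards [eventually_integral_det_id_add_smul_fderiv_eq μ hs hφ hfr] with t ht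
    simpa [hP, hpdet] using ht
  simpa [hconst, hpdet] using (hP 1).symm

theorem exists_det_fderiv_ne_zero_of_forall_mem_frontier_eq {s : Set V} {r : V → V}
    (hs : IsCompact s) (hne : (interior s).Nonempty) (hr : ContDiff ℝ 1 r)
    (hfr : ∀ x ∈ frontier s, r x = x) : ∃ x ∈ s, (fderiv ℝ r x).det ≠ 0 := by
  by_contra! h
  borelize V
  let μ : Measure V := Measure.addHaar
  have hvol := integral_det_id_add_fderiv_eq μ hs (hr.sub contDiff_id)
    fun x hx => sub_eq_zero.2 (hfr x hx)
  have hzero : ∀ x ∈ s,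
      (ContinuousLinearMap.id ℝ V + fderiv ℝ (fun y => r y - id y) x).det = 0 := fun x hx => by
    rw [fderiv_fun_sub (hr.differentiable one_ne_zero x) differentiableAt_id, fderiv_id,
      add_sub_cancel, h x hx]
  rw [setIntegral_congr_fun hs.measurableSet hzero, integral_zero] at hvol
  have hpos : 0 < μ.real s := ENNReal.toReal_pos
    (Measure.measure_pos_of_nonempty_interior μ hne).ne' hs.measure_lt_top.ne
  exact hpos.ne hvol

end VolumeArgument

section InnerFixedPoint

variable {V : Type*} [NormedAddCommGroup V] [InnerProductSpace ℝ V] [FiniteDimensional ℝ V]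

theorem det_fderiv_eq_zero_of_norm_eq_const {r : V → V} {x : V} {c : ℝ}
    (hc : c ≠ 0) (hr : DifferentiableAt ℝ r x) (hnorm : ∀ᶠ y in 𝓝 x, ‖r y‖ = c) :
    (fderiv ℝ r x).det = 0 := by
  by_contra hdet
  -- The derivative of `‖r‖ ^ 2` in a direction mapped to `r x` is `2 * ‖r x‖ ^ 2`.
  obtain ⟨v, hv⟩ : ∃ v, fderiv ℝ r x v = r x :=
    (LinearMap.equivOfDetNeZero (fderiv ℝ r x : V →ₗ[ℝ] V) hdet).surjective (r x)
  have hconst : HasFDerivAt (fun y => ‖r y‖ ^ 2) (0 : V →L[ℝ] ℝ) x :=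
    (hasFDerivAt_const (c ^ 2) x).congr_of_eventuallyEq (hnorm.mono fun y hy => by simp [hy])
  have hinner := DFunLike.congr_fun (hr.hasFDerivAt.norm_sq.unique hconst) v
  simp [hv, hnorm.self_of_nhds, hc] at hinner

theorem not_forall_norm_eq_of_forall_mem_sphere_eq {r : V → V} {R : ℝ} (hR : 0 < R)
    (hr : ContDiff ℝ 1 r) (hfix : ∀ x ∈ sphere 0 R, r x = x) : ¬ ∀ x, ‖r x‖ = R := by
  intro hnorm
  obtain ⟨x, -, hx⟩ := exists_det_fderiv_ne_zero_of_forall_mem_frontier_eq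
    (isCompact_closedBall (0 : V) R)
    ⟨0, ball_subset_interior_closedBall (mem_ball_self hR)⟩ hr
    (by rwa [frontier_closedBall _ hR.ne'])
  exact hx (det_fderiv_eq_zero_of_norm_eq_const hR.ne' (hr.differentiable one_ne_zero x)
    (Eventually.of_forall hnorm))

theorem exists_isFixedPt_of_contDiff_of_norm_le {p : V → V} {ρ : ℝ}
    (hp : ContDiff ℝ 1 p) (hρ : ∀ x, ‖p x‖ ≤ ρ) : ∃ x, IsFixedPt p x := by
  by_contra! hfix
  have hρ0 : 0 ≤ ρ := (norm_nonneg _).trans (hρ 0)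
  let χ : ContDiffBump (0 : V) := ⟨ρ + 1, ρ + 2, by linarith, by linarith⟩
  let F : V → V := fun x => x - χ x • p x
  have hF : ContDiff ℝ 1 F := contDiff_id.sub (χ.contDiff.smul hp)
  have hF0 : ∀ x, F x ≠ 0 := by
    intro x hx
    have hxp : x = χ x • p x := sub_eq_zero.1 hx
    rcases le_or_gt ‖x‖ (ρ + 1) with hle | hgt
    · rw [χ.one_of_mem_closedBall (mem_closedBall_zero_iff.2 hle), one_smul] at hxp
      exact hfix x hxp.symm
    · have hle : ‖x‖ ≤ ρ := calc
        ‖x‖ = χ x * ‖p x‖ := by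
          conv_lhs => rw [hxp, norm_smul, Real.norm_of_nonneg χ.nonneg]
        _ ≤ 1 * ρ := by gcongr; exacts [χ.le_one, hρ x]
        _ = ρ := one_mul ρ
      linarith
  have hR : 0 < ρ + 2 := by linarith
  refine not_forall_norm_eq_of_forall_mem_sphere_eq (r := fun x => ((ρ + 2) / ‖F x‖) • F x) hR
    ((contDiff_const.div (hF.norm ℝ hF0) fun x => norm_ne_zero_iff.2 (hF0 x)).smul hF) ?_ ?_
  · intro x hx
    have hx' : ‖x‖ = ρ + 2 := mem_sphere_zero_iff_norm.1 hx
    have hχ : χ x = 0 := χ.zero_of_le_dist (mem_sphere.1 hx).ge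
    simp only [F, hχ, zero_smul, sub_zero, hx', div_self hR.ne', one_smul]
  · intro x
    rw [norm_smul, Real.norm_of_nonneg (by positivity),
      div_mul_cancel₀ _ (norm_ne_zero_iff.2 (hF0 x))]

theorem exists_isFixedPt_of_continuous_of_norm_le {g : V → V} {ρ : ℝ}
    (hg : Continuous g) (hρ : ∀ x, ‖g x‖ ≤ ρ) : ∃ x, IsFixedPt g x := by
  have happrox : ∀ ε ∈ Ioc (0 : ℝ) 1, ∃ x ∈ closedBall (0 : V) (ρ + 1), dist x (g x) < ε := by
    rintro ε ⟨hε, hε1⟩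
    obtain ⟨p, hp, hpg, -⟩ := hg.exists_contDiff_approx 1 continuous_const fun _ => hε
    have hpρ : ∀ x, ‖p x‖ ≤ ρ + 1 := fun x => by
      have := norm_le_norm_add_norm_sub' (p x) (g x)
      linarith [hρ x, dist_eq_norm (p x) (g x), hpg x]
    obtain ⟨x, hx⟩ := exists_isFixedPt_of_contDiff_of_norm_le hp hpρ
    refine ⟨x, ?_, ?_⟩
    · simpa [hx.eq] using hpρ x
    · simpa [hx.eq] using hpg x
  have hρ0 : 0 ≤ ρ := (norm_nonneg _).trans (hρ 0)
  obtain ⟨x, -, hmin⟩ := (isCompact_closedBall (0 : V) (ρ + 1)).exists_isMinOn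
    (nonempty_closedBall.2 (by linarith)) (continuous_id.dist hg).continuousOn
  refine ⟨x, ?_⟩
  by_contra hx
  have hpos : 0 < dist x (g x) := dist_pos.2 (Ne.symm hx)
  obtain ⟨y, hy, hlt⟩ := happrox (min (dist x (g x)) 1) ⟨by positivity, min_le_right _ _⟩
  exact (hmin hy).not_gt (hlt.trans_le (min_le_left _ _))

end InnerFixedPoint

theorem exists_isFixedPt_of_continuous_of_isBounded_range {V : Type*} [NormedAddCommGroup V]
    [NormedSpace ℝ V] [FiniteDimensional ℝ V] {g : V → V}
    (hg : Continuous g) (hb : IsBounded (range g)) : ∃ x, IsFixedPt g x := by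
  let e : V ≃L[ℝ] EuclideanSpace ℝ (Fin (finrank ℝ V)) := toEuclidean
  obtain ⟨ρ, hρ⟩ := (e.lipschitz.isBounded_image hb).exists_norm_le
  obtain ⟨y, hy⟩ := exists_isFixedPt_of_continuous_of_norm_le
    (g := fun y => e (g (e.symm y))) (by fun_prop)
    fun y => hρ _ (mem_image_of_mem e (mem_range_self _))
  refine ⟨e.symm y, ?_⟩
  rw [IsFixedPt, ← e.symm_apply_apply (g (e.symm y)), hy.eq]

theorem exists_mem_isFixedPt_of_isCompact.{u} {V : Type u} [NormedAddCommGroup V]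
    [NormedSpace ℝ V] [FiniteDimensional ℝ V] {s : Set V} [TietzeExtension.{u, u} s] {f : V → V}
    (hs : IsCompact s) (hf : ContinuousOn f s) (hmaps : MapsTo f s s) :
    ∃ x ∈ s, IsFixedPt f x := by
  obtain ⟨g, hg⟩ := ContinuousMap.exists_restrict_eq hs.isClosed
    ⟨hmaps.restrict f s s, hf.mapsToRestrict hmaps⟩
  obtain ⟨x, hx⟩ := exists_isFixedPt_of_continuous_of_isBounded_range
    (continuous_subtype_val.comp g.continuous)
    (hs.isBounded.subset (range_subset_iff.2 fun y => (g y).2))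
  have hxs : x ∈ s := hx.eq ▸ (g x).2
  have hgx : (g x : V) = f x := congrArg Subtype.val (DFunLike.congr_fun hg ⟨x, hxs⟩)
  exact ⟨x, hxs, hgx.symm.trans hx⟩

theorem exists_mem_closedBall_isFixedPt.{u} {V : Type u} [NormedAddCommGroup V]
    [NormedSpace ℝ V] [FiniteDimensional ℝ V] {x₀ : V} {δ : ℝ} {f : V → V} (hδ : 0 < δ)
    (hf : ContinuousOn f (closedBall x₀ δ)) (hmaps : MapsTo f (closedBall x₀ δ) (closedBall x₀ δ)) :
    ∃ x ∈ closedBall x₀ δ, IsFixedPt f x :=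
  have : TietzeExtension.{u, u} (closedBall x₀ δ) :=
    Metric.instTietzeExtensionClosedBall ℝ x₀ hδ
  exists_mem_isFixedPt_of_isCompact (isCompact_closedBall x₀ δ) hf hmaps

theorem exists_comp_eq_id_comp_eq_of_isIdempotentElem {𝕜 V E : Type*}
    [NontriviallyNormedField 𝕜] [CompleteSpace 𝕜] [NormedAddCommGroup V] [NormedSpace 𝕜 V]
    [FiniteDimensional 𝕜 V] [NormedAddCommGroup E] [NormedSpace 𝕜 E] {D : V →L[𝕜] E}
    {P : E →L[𝕜] E} (hD : Injective D) (hP : IsIdempotentElem P) (hrange : range P = range D) :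
    ∃ T : E →L[𝕜] V, T.comp D = .id 𝕜 V ∧ D.comp T = P := by
  let e := (LinearEquiv.ofInjective (D : V →ₗ[𝕜] E) hD).toContinuousLinearEquiv
  have hmem : ∀ v, P v ∈ LinearMap.range (D : V →ₗ[𝕜] E) := fun v =>
    hrange.subset (mem_range_self v)
  let T : E →L[𝕜] V := e.symm.toContinuousLinearMap.comp (P.codRestrict _ hmem)
  have hDT : ∀ v, D (T v) = P v := fun v =>
    congrArg Subtype.val (e.apply_symm_apply (P.codRestrict _ hmem v))
  refine ⟨T, ContinuousLinearMap.ext fun x => hD ?_, ContinuousLinearMap.ext hDT⟩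
  obtain ⟨y, hy⟩ : D x ∈ range P := hrange ▸ mem_range_self x
  calc D (T (D x)) = P (P y) := by rw [hDT, hy]
    _ = P y := DFunLike.congr_fun hP.eq y
    _ = D x := hy

theorem apply_eq_zero_of_norm_sub_lt_one {𝕜 E : Type*} [NontriviallyNormedField 𝕜]
    [NormedAddCommGroup E] [NormedSpace 𝕜 E] {P Q : E →L[𝕜] E} {v : E}
    (hQ : IsIdempotentElem Q) (hPQ : ‖Q - P‖ < 1) (hv : P (Q v) = 0) : Q v = 0 := by
  by_contra hne
  have hfix : (Q - P) (Q v) = Q v := by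
    rw [sub_apply, hv, sub_zero]
    exact DFunLike.congr_fun hQ.eq v
  have hle : ‖Q v‖ ≤ ‖Q - P‖ * ‖Q v‖ := by
    simpa only [hfix] using (Q - P).le_opNorm (Q v)
  nlinarith [norm_pos_iff.2 hne]

theorem hasFDerivAt_clm_apply_of_apply_eq_zero {𝕜 V E F : Type*} [NontriviallyNormedField 𝕜]
    [NormedAddCommGroup V] [NormedSpace 𝕜 V] [NormedAddCommGroup E] [NormedSpace 𝕜 E]
    [NormedAddCommGroup F] [NormedSpace 𝕜 F] {A : V → E →L[𝕜] F} {f : V → E} {f' : V →L[𝕜] E}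
    {x : V} (hA : ContinuousAt A x) (hf : HasFDerivAt f f' x) (hfx : f x = 0) :
    HasFDerivAt (fun y => A y (f y)) ((A x).comp f') x := by
  have hA0 : (fun y => A y - A x) =o[𝓝 x] fun _ => (1 : ℝ) :=
    (Asymptotics.isLittleO_one_iff ℝ).2 (tendsto_sub_nhds_zero_iff.2 hA)
  have hfO : f =O[𝓝 x] fun y => y - x := by simpa [hfx] using hf.isBigO_sub
  have hsmall : (fun y => (A y - A x) (f y)) =o[𝓝 x] fun y => y - x := by
    refine (Asymptotics.IsBigO.of_norm_le (g := fun y => ‖A y - A x‖ * ‖f y‖)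
      fun y => (A y - A x).le_opNorm (f y)).trans_isLittleO ?_
    simpa using (hA0.norm_left.mul_isBigO hfO.norm_norm)
  have hzero : HasFDerivAt (fun y => (A y - A x) (f y)) (0 : V →L[𝕜] F) x :=
    .of_isLittleO (by simpa [hfx] using hsmall)
  have hsum := ((A x).hasFDerivAt.comp x hf).add hzero
  rw [add_zero] at hsum
  exact hsum.congr_of_eventuallyEq (Eventually.of_forall fun y => by simp)

section Selection

variable {V E : Type*} [NormedAddCommGroup V] [NormedSpace ℝ V] [NormedAddCommGroup E]
  [NormedSpace ℝ E]

theorem norm_le_of_apply_sub_eq_zero {L : E →L[ℝ] V} {K : ℝ} {v : V} {ξ η ζ : E}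
    (hK : ‖L‖ ≤ K) (hL : ‖L (η - ζ) - v‖ ≤ 1 / 2 * ‖v‖) (hξ : L (ξ - η) = 0) :
    ‖v‖ ≤ 2 * K * ‖ξ - ζ‖ := by
  have hsplit : L (ξ - ζ) = L (η - ζ) := by
    rw [← sub_add_sub_cancel ξ η ζ, map_add, hξ, zero_add]
  have hv := norm_le_norm_add_norm_sub (L (η - ζ)) v
  have hbound := L.le_of_opNorm_le hK (ξ - ζ)
  rw [hsplit] at hbound
  linarith

theorem exists_mem_ball_apply_sub_eq_zero [FiniteDimensional ℝ V] {A : V → E →L[ℝ] V}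
    {S : V → E} {h₀ : V} {δ K : ℝ} {ξ : E} (hδ : 0 < δ)
    (hA : ContinuousOn A (closedBall h₀ δ)) (hS : ContinuousOn S (closedBall h₀ δ))
    (hK : ∀ h ∈ closedBall h₀ δ, ‖A h‖ ≤ K)
    (hAS : ∀ h ∈ closedBall h₀ δ, ‖A h (S h - S h₀) - (h - h₀)‖ ≤ 1 / 2 * ‖h - h₀‖)
    (hξ : 2 * K * ‖ξ - S h₀‖ < δ) : ∃ h ∈ ball h₀ δ, A h (ξ - S h) = 0 := by
  have hmaps : MapsTo (fun h => h + A h (ξ - S h)) (closedBall h₀ δ) (closedBall h₀ δ) := by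
    intro h hh
    have hsplit : h + A h (ξ - S h) - h₀ =
        A h (ξ - S h₀) - (A h (S h - S h₀) - (h - h₀)) := by
      rw [← sub_sub_sub_cancel_right ξ (S h) (S h₀), map_sub]
      abel
    rw [mem_closedBall_iff_norm] at hh ⊢
    calc ‖h + A h (ξ - S h) - h₀‖
        ≤ ‖A h (ξ - S h₀)‖ + ‖A h (S h - S h₀) - (h - h₀)‖ := hsplit ▸ norm_sub_le _ _
      _ ≤ K * ‖ξ - S h₀‖ + 1 / 2 * ‖h - h₀‖ :=
        add_le_add ((A h).le_of_opNorm_le (hK h (mem_closedBall_iff_norm.2 hh)) _)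
          (hAS h (mem_closedBall_iff_norm.2 hh))
      _ ≤ δ := by linarith
  obtain ⟨h, hh, hfix⟩ := exists_mem_closedBall_isFixedPt hδ
    (continuousOn_id.add (hA.clm_apply (continuousOn_const.sub hS))) hmaps
  have hzero : A h (ξ - S h) = 0 := add_eq_left.1 hfix
  have hnorm := norm_le_of_apply_sub_eq_zero (hK h hh) (hAS h hh) hzero
  exact ⟨h, mem_ball_iff_norm.2 (hnorm.trans_lt hξ), hzero⟩

theorem eventually_norm_clm_apply_sub_sub_le {A : V → E →L[ℝ] V} {S : V → E}
    {D : V →L[ℝ] E} {h₀ : V} {c : ℝ} (hA : ContinuousAt A h₀) (hS : HasFDerivAt S D h₀)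
    (hAD : (A h₀).comp D = .id ℝ V) (hc : 0 < c) :
    ∀ᶠ h in 𝓝 h₀, ‖A h (S h - S h₀) - (h - h₀)‖ ≤ c * ‖h - h₀‖ := by
  have hderiv := hasFDerivAt_clm_apply_of_apply_eq_zero hA (hS.sub_const (S h₀)) (sub_self _)
  rw [hAD] at hderiv
  simpa using hderiv.isLittleO.def hc

theorem exists_eventually_norm_le_and_exists_apply_sub_eq_zero [FiniteDimensional ℝ V]
    {A : V → E →L[ℝ] V} {S : V → E} {D : V →L[ℝ] E} {h₀ : V} {s : Set V} (hs : s ∈ 𝓝 h₀)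
    (hA : ContinuousOn A s) (hS : ContinuousOn S s) (hD : HasFDerivAt S D h₀)
    (hAD : (A h₀).comp D = .id ℝ V) :
    ∃ C > 0, ∀ᶠ δ in 𝓝[>] 0,
      (∀ h ∈ closedBall h₀ δ, ∀ ξ, A h (ξ - S h) = 0 → ‖h - h₀‖ ≤ C * ‖ξ - S h₀‖) ∧
      ∀ ξ, C * ‖ξ - S h₀‖ < δ → ∃ h ∈ ball h₀ δ, A h (ξ - S h) = 0 := by
  let K : ℝ := ‖A h₀‖ + 1
  have hA₀ : ContinuousAt A h₀ := hA.continuousAt hs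
  have hK : ∀ᶠ h in 𝓝 h₀, ‖A h‖ ≤ K :=
    (hA₀.norm.eventually_lt_const (lt_add_one _)).mono fun _ => le_of_lt
  have hnear : ∀ᶠ h in 𝓝 h₀, h ∈ s ∧ ‖A h‖ ≤ K ∧
      ‖A h (S h - S h₀) - (h - h₀)‖ ≤ 1 / 2 * ‖h - h₀‖ :=
    .and hs (hK.and (eventually_norm_clm_apply_sub_sub_le hA₀ hD hAD one_half_pos))
  refine ⟨2 * K, by positivity, ?_⟩
  filter_upwards [(eventually_closedBall_subset hnear).filter_mono nhdsWithin_le_nhds,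
    self_mem_nhdsWithin] with δ hδ hδpos
  have hsub : closedBall h₀ δ ⊆ s := fun h hh => (hδ hh).1
  exact ⟨fun h hh ξ => norm_le_of_apply_sub_eq_zero (hδ hh).2.1 (hδ hh).2.2,
    fun ξ => exists_mem_ball_apply_sub_eq_zero hδpos (hA.mono hsub) (hS.mono hsub)
      (fun h hh => (hδ hh).2.1) fun h hh => (hδ hh).2.2⟩

theorem stmt10_general [FiniteDimensional ℝ V] {h₀ : V} {r₀ : ℝ} (hr₀ : 0 < r₀)
    {S : V → E} {D : V →L[ℝ] E} {P : V → E →L[ℝ] E}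
    (hS : ContinuousOn S (ball h₀ r₀)) (hD : HasFDerivAt S D h₀) (hinj : Injective D)
    (hP : ∀ h ∈ ball h₀ r₀, IsIdempotentElem (P h)) (hrange : range (P h₀) = range D)
    (hPcont : ContinuousOn P (ball h₀ r₀)) :
    ∃ δ ∈ Ioo 0 r₀, ∃ r₁ > 0,
      (∀ h ∈ closedBall h₀ δ, P h (S h₀ - S h) = 0 → h = h₀) ∧
      (∀ ξ ∈ ball (S h₀) r₁, ∃ h ∈ ball h₀ δ, P h (ξ - S h) = 0) ∧
      (∀ H : E → V,
        (∀ ξ ∈ ball (S h₀) r₁, H ξ ∈ closedBall h₀ δ ∧ P (H ξ) (ξ - S (H ξ)) = 0) →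
        Tendsto H (𝓝[ball (S h₀) r₁] (S h₀)) (𝓝 h₀)) := by
  have hball : ball h₀ r₀ ∈ 𝓝 h₀ := ball_mem_nhds h₀ hr₀
  obtain ⟨T, hTD, hDT⟩ :=
    exists_comp_eq_id_comp_eq_of_isIdempotentElem hinj (hP h₀ (mem_ball_self hr₀)) hrange
  have hAD : (T.comp (P h₀)).comp D = .id ℝ V := by
    rw [← hDT, ContinuousLinearMap.comp_assoc, ContinuousLinearMap.comp_assoc, hTD,
      ContinuousLinearMap.comp_id, hTD]
  have hker : ∀ᶠ h in 𝓝 h₀, ∀ v, T (P h v) = 0 → P h v = 0 := by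
    filter_upwards [hball, (hPcont.continuousAt hball).eventually (ball_mem_nhds _ one_pos)]
      with h hh hnear
    exact fun v hv => apply_eq_zero_of_norm_sub_lt_one (hP h hh) (mem_ball_iff_norm.1 hnear)
      (by rw [← hDT, ContinuousLinearMap.comp_apply, hv, map_zero])
  obtain ⟨C, hC, hsol⟩ := exists_eventually_norm_le_and_exists_apply_sub_eq_zero hball
    (continuousOn_const.clm_comp hPcont) hS hD hAD
  obtain ⟨δ, ⟨hestT, hex⟩, hδker, hδ⟩ := (hsol.and (((eventually_closedBall_subset hker).filter_mono
    nhdsWithin_le_nhds).and (Ioo_mem_nhdsGT hr₀))).exists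
  have hest : ∀ h ∈ closedBall h₀ δ, ∀ ξ, P h (ξ - S h) = 0 → ‖h - h₀‖ ≤ C * ‖ξ - S h₀‖ :=
    fun h hh ξ hξ => hestT h hh ξ (by rw [ContinuousLinearMap.comp_apply, hξ, map_zero])
  refine ⟨δ, hδ, δ / C, div_pos hδ.1 hC, fun h hh hzero => ?_, fun ξ hξ => ?_, fun H hH => ?_⟩
  · simpa [sub_eq_zero] using hest h hh _ hzero
  · obtain ⟨h, hh, hzero⟩ := hex ξ ((lt_div_iff₀' hC).1 (mem_ball_iff_norm.1 hξ))
    exact ⟨h, hh, hδker (ball_subset_closedBall hh) _ hzero⟩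
  · refine tendsto_iff_norm_sub_tendsto_zero.2 (squeeze_zero'
      (g := fun ξ => C * ‖ξ - S h₀‖) (Eventually.of_forall fun _ => norm_nonneg _)
      (eventually_mem_nhdsWithin.mono fun ξ hξ => hest _ (hH ξ hξ).1 ξ (hH ξ hξ).2) ?_)
    exact (Continuous.tendsto' (by fun_prop) _ _ (by simp)).mono_left nhdsWithin_le_nhds

end Selection

end

/- Construction of the function H: there are δ ∈ (0,r0) and r1 > 0 such that h0 is the
only solution of π_{1,h}(ξ0 − S(h)) = 0 in the closed δ-ball, for every ξ near ξ0 there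
is a solution h of π_{1,h}(ξ − S(h)) = 0 in the δ-ball, and every selection H of such
solutions satisfies H(ξ) → h0 as ξ → ξ0. -/
theorem stmt10
    {E : Type*} [NormedAddCommGroup E] [NormedSpace ℝ E] [CompleteSpace E]
    {k : ℕ} (hk : 1 ≤ k)
    -- (A1)
    (h0 : EuclideanSpace ℝ (Fin k)) (r0 : ℝ) (hr0 : 0 < r0)
    (S : EuclideanSpace ℝ (Fin k) → E)
    (S' : EuclideanSpace ℝ (Fin k) → (EuclideanSpace ℝ (Fin k) →L[ℝ] E))
    (hS : ∀ h ∈ ball h0 r0, HasFDerivAt S (S' h) h)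
    (hS'cont : ContinuousOn S' (ball h0 r0))
    -- (A2)
    (hA2 : Function.Injective ⇑(S' h0))
    -- S'(h) is injective for every h in the ball
    (hinj : ∀ h ∈ ball h0 r0, Function.Injective ⇑(S' h))
    -- (A3)
    (π1 : EuclideanSpace ℝ (Fin k) → E →L[ℝ] E)
    (hproj : ∀ h ∈ ball h0 r0, (π1 h).comp (π1 h) = π1 h)
    (hrange : ∀ h ∈ ball h0 r0, range ⇑(π1 h) = range ⇑(S' h))
    (hπ1cont : ContinuousOn π1 (ball h0 r0)) :
    ∃ δ ∈ Ioo (0:ℝ) r0, ∃ r1 > (0:ℝ),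
      -- (i) h0 is the only solution in the closed δ-ball
      (∀ h ∈ closedBall h0 δ, π1 h (S h0 - S h) = 0 → h = h0) ∧
      -- (ii) existence of a solution for every ξ near ξ0
      (∀ ξ ∈ ball (S h0) r1, ∃ h ∈ ball h0 δ, π1 h (ξ - S h) = 0) ∧
      -- (iii) any selection H of solutions tends to h0 as ξ → ξ0
      (∀ H : E → EuclideanSpace ℝ (Fin k),
        (∀ ξ ∈ ball (S h0) r1, H ξ ∈ closedBall h0 δ ∧ π1 (H ξ) (ξ - S (H ξ)) = 0) →
        Tendsto H (𝓝[ball (S h0) r1] (S h0)) (𝓝 h0)) :=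
  stmt10_general hr0 (fun h hh => (hS h hh).continuousAt.continuousWithinAt)
    (hS h0 (mem_ball_self hr0)) hA2 hproj (hrange h0 (mem_ball_self hr0)) hπ1cont
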